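/- Let q ≥ 2 be an integer, σ > 0 a real number, and C a real number with σ/√π ≤ C ≤ q/2. Then Σ_{x∈ℤ, C < x < q/2} √(ϑ_{σ,q}(x)) ≤ ((1 + √2·σ)/√σ) · (C/(√2·σ)) · √(2πe) · exp(−πC²/(2σ²)), where ϑ_{σ,q} is evaluated at the class of x modulo q. -/

import Mathlib

/-- One-dimensional folded discrete Gaussian `ϑ_{σ,q}` on `ℤ/qℤ`, via the
representative `x̄ ∈ (−q/2, q/2]` (`ZMod.valMinAbs`). -/
noncomputable def theta1 (σ : ℝ) (q : ℕ) (x : ZMod q) : ℝ :=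
  (∑' k : ℤ, Real.exp (-Real.pi * ((x.valMinAbs : ℝ) + q * k) ^ 2 / σ ^ 2)) /
    ∑' k : ℤ, Real.exp (-Real.pi * (k : ℝ) ^ 2 / σ ^ 2)

/-!
By Poisson summation the normalising sum in `ϑ_{σ,q}` is at least `σ`, and `√(∑ f) ≤ ∑ √f`, so
`√ϑ_{σ,q}(x)` is at most `σ^{-1/2}` times a Gaussian of width `√2·σ` summed over the class `x + qℤ`.
When `|x̄| ≥ C`, the whole class has absolute value at least `C`, and there a Gaussian
`exp (-a n²)` is at most `exp ((b - a) C²)` times the wider Gaussian `exp (-b n²)`, `b ≤ a`.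
The classes partition `ℤ`, so the wider Gaussian sums to at most `1 + √(π / b)`.
The choice `b = 1 / (2 C²)` minimises `exp (b C²) √(π / b)`, and it is admissible because
`σ / √π ≤ C`.
-/

open Real Set MeasureTheory

section IntegralComparison

variable {f : ℝ → ℝ}

lemma summable_intCast_of_even_of_antitoneOn (heven : f.Even) (hanti : AntitoneOn f (Ici 0))
    (hint : IntegrableOn f (Ioi 0)) (hnonneg : ∀ x ∈ Ioi 0, 0 ≤ f x) :
    Summable fun n : ℤ ↦ f n := by
  have hnat : Summable fun n : ℕ ↦ f n := hanti.summable_of_integrableOn_Ioi_zero hint hnonneg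
  exact .of_nat_of_neg (by simpa using hnat) (by simpa [heven _] using hnat)

lemma tsum_intCast_le_of_even_of_antitoneOn (heven : f.Even) (hanti : AntitoneOn f (Ici 0))
    (hint : IntegrableOn f (Ioi 0)) (hnonneg : ∀ x ∈ Ioi 0, 0 ≤ f x) :
    ∑' n : ℤ, f n ≤ f 0 + ∫ x, f x := by
  have hsummable : Summable fun n : ℕ ↦ f (n + 1 : ℕ) :=
    (summable_nat_add_iff 1).2 (hanti.summable_of_integrableOn_Ioi_zero hint hnonneg)
  have hneg (n : ℕ) : f ((-(n + 1) : ℤ) : ℝ) = f (n + 1 : ℕ) := by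
    rw [← heven]
    push_cast
    rw [neg_neg]
  have hhalf : ∫ x, f x = 2 * ∫ x in Ioi 0, f x := by
    have habs (x : ℝ) : f |x| = f x := by
      rcases abs_choice x with h | h <;> simp only [h, heven x]
    simpa only [habs] using integral_comp_abs (f := f)
  calc ∑' n : ℤ, f n
      = ∑' n : ℕ, f (n + 1 : ℕ) + f 0 + ∑' n : ℕ, f (n + 1 : ℕ) := by
        rw [tsum_of_add_one_of_neg_add_one (f := fun n : ℤ ↦ f n)
          (by simpa using hsummable) (by simpa only [hneg] using hsummable)]
        simp only [hneg]
        simp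
    _ ≤ f 0 + ∫ x, f x := by
        linarith [hanti.tsum_add_one_le_integral hint hnonneg]

end IntegralComparison

section Gaussian

variable {a b : ℝ}

lemma even_exp_neg_mul_sq (b : ℝ) : (fun x : ℝ ↦ exp (-b * x ^ 2)).Even := fun x ↦ by
  simp only [neg_sq]

lemma antitoneOn_exp_neg_mul_sq (hb : 0 ≤ b) :
    AntitoneOn (fun x : ℝ ↦ exp (-b * x ^ 2)) (Ici 0) := fun _ hx _ _ hxy ↦
  exp_le_exp.2 <| mul_le_mul_of_nonpos_left (pow_le_pow_left₀ hx hxy 2) (neg_nonpos.2 hb)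

lemma summable_exp_neg_mul_int_sq (hb : 0 < b) : Summable fun n : ℤ ↦ exp (-b * (n : ℝ) ^ 2) :=
  summable_intCast_of_even_of_antitoneOn (even_exp_neg_mul_sq b) (antitoneOn_exp_neg_mul_sq hb.le)
    (integrableOn_Ioi_exp_neg_mul_sq_iff.2 hb) fun _ _ ↦ (exp_pos _).le

lemma tsum_exp_neg_mul_int_sq_le (hb : 0 < b) :
    ∑' n : ℤ, exp (-b * (n : ℝ) ^ 2) ≤ 1 + √(π / b) := by
  simpa only [integral_gaussian, zero_pow two_ne_zero, mul_zero, exp_zero] using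
    tsum_intCast_le_of_even_of_antitoneOn (even_exp_neg_mul_sq b) (antitoneOn_exp_neg_mul_sq hb.le)
      (integrableOn_Ioi_exp_neg_mul_sq_iff.2 hb) fun _ _ ↦ (exp_pos _).le

lemma sqrt_pi_div_le_tsum_exp_neg_mul_int_sq (hb : 0 < b) :
    √(π / b) ≤ ∑' n : ℤ, exp (-b * (n : ℝ) ^ 2) := by
  have hpoisson : ∑' n : ℤ, exp (-b * (n : ℝ) ^ 2) =
      √(π / b) * ∑' n : ℤ, exp (-(π ^ 2 / b) * (n : ℝ) ^ 2) := by
    have h := tsum_exp_neg_mul_int_sq (a := b / π) (by positivity)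
    rw [← sqrt_eq_rpow, one_div, ← sqrt_inv, inv_div] at h
    convert h using 6 <;> field_simp
  have hdual : 1 ≤ ∑' n : ℤ, exp (-(π ^ 2 / b) * (n : ℝ) ^ 2) := by
    simpa using (summable_exp_neg_mul_int_sq (b := π ^ 2 / b) (by positivity)).le_tsum 0
      fun _ _ ↦ (exp_pos _).le
  rw [hpoisson]
  exact le_mul_of_one_le_right (sqrt_nonneg _) hdual

lemma exp_neg_mul_sq_le_exp_mul_exp {c x : ℝ} (hba : b ≤ a) (hc : 0 ≤ c) (hcx : c ≤ |x|) :
    exp (-a * x ^ 2) ≤ exp ((b - a) * c ^ 2) * exp (-b * x ^ 2) := by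
  have hsq : c ^ 2 ≤ x ^ 2 := sq_abs x ▸ pow_le_pow_left₀ hc hcx 2
  rw [← exp_add, exp_le_exp]
  linarith [mul_le_mul_of_nonpos_left hsq (sub_nonpos.2 hba)]

end Gaussian

lemma sqrt_tsum_le_tsum_sqrt {ι : Type*} {f : ι → ℝ} (hf : ∀ i, 0 ≤ f i)
    (hsummable : Summable fun i ↦ √(f i)) : √(∑' i, f i) ≤ ∑' i, √(f i) := by
  set S := ∑' i, √(f i)
  have hle (i : ι) : f i ≤ S * √(f i) := calc
    f i = √(f i) * √(f i) := (mul_self_sqrt (hf i)).symm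
    _ ≤ S * √(f i) := by
      gcongr
      exact hsummable.le_tsum i fun _ _ ↦ sqrt_nonneg _
  have hsum : Summable f := .of_nonneg_of_le hf hle (hsummable.mul_left S)
  refine sqrt_le_iff.2 ⟨tsum_nonneg fun _ ↦ sqrt_nonneg _, ?_⟩
  calc ∑' i, f i ≤ ∑' i, S * √(f i) := hsum.tsum_le_tsum hle (hsummable.mul_left S)
    _ = S ^ 2 := by rw [tsum_mul_left, sq]

section ResidueClasses

variable {q : ℕ} [NeZero q]

lemma injective_valMinAbs_add_mul (x : ZMod q) :
    Function.Injective fun k : ℤ ↦ x.valMinAbs + q * k := fun _ _ h ↦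
  mul_left_cancel₀ (Int.natCast_ne_zero.2 (NeZero.ne q)) (add_left_cancel h)

lemma bijective_valMinAbs_add_mul :
    Function.Bijective fun p : ZMod q × ℤ ↦ p.1.valMinAbs + q * p.2 := by
  constructor
  · rintro ⟨x, k⟩ ⟨y, l⟩ h
    obtain rfl : x = y := by
      simpa using congrArg (Int.cast : ℤ → ZMod q) h
    exact congrArg (Prod.mk x) (injective_valMinAbs_add_mul x h)
  · intro n
    obtain ⟨k, hk⟩ : (q : ℤ) ∣ n - (n : ZMod q).valMinAbs := by
      rw [← ZMod.intCast_eq_intCast_iff_dvd_sub, ZMod.coe_valMinAbs]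
    exact ⟨(n, k), by simp only [← hk, add_sub_cancel]⟩

lemma sum_tsum_valMinAbs_add_mul {E : Type*} [AddCommGroup E] [UniformSpace E]
    [IsUniformAddGroup E] [CompleteSpace E] [T2Space E] {g : ℤ → E} (hg : Summable g) :
    ∑ x : ZMod q, ∑' k : ℤ, g (x.valMinAbs + q * k) = ∑' n, g n := by
  let e := Equiv.ofBijective _ (bijective_valMinAbs_add_mul (q := q))
  have hge : Summable fun p ↦ g (e p) := e.summable_iff.2 hg
  calc ∑ x : ZMod q, ∑' k : ℤ, g (x.valMinAbs + q * k) = ∑' p, g (e p) := by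
        rw [hge.tsum_prod, tsum_fintype]
        rfl
    _ = ∑' n, g n := e.tsum_eq g

lemma abs_valMinAbs_le_abs_valMinAbs_add_mul (x : ZMod q) (k : ℤ) :
    |x.valMinAbs| ≤ |x.valMinAbs + q * k| := by
  rw [Int.abs_eq_natAbs, Int.abs_eq_natAbs, Int.ofNat_le]
  exact ZMod.natAbs_min_of_le_div_two q _ _ (by simp) x.natAbs_valMinAbs_le

lemma valMinAbs_intCast_of_abs_lt_half {n : ℤ} (hn : |(n : ℝ)| < q / 2) :
    (n : ZMod q).valMinAbs = n := by
  have hn' : |n| * 2 < q := by exact_mod_cast (lt_div_iff₀ two_pos).1 hn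
  exact (ZMod.valMinAbs_spec _ _).2 ⟨rfl, by linarith [neg_abs_le n], by linarith [le_abs_self n]⟩

lemma tsum_intCast_le_sum_valMinAbs {f : ZMod q → ℝ} (hf : ∀ x, 0 ≤ f x) {c : ℝ} (hc : 0 ≤ c) :
    ∑' n : {n : ℤ // c < (n : ℝ) ∧ (n : ℝ) < (q : ℝ) / 2}, f (n.1 : ZMod q) ≤
      ∑ x : ZMod q with c ≤ |(x.valMinAbs : ℝ)|, f x := by
  let S := {n : ℤ // c < (n : ℝ) ∧ (n : ℝ) < (q : ℝ) / 2}
  let T := {x : ZMod q // c ≤ |(x.valMinAbs : ℝ)|}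
  have hval (n : S) : ((n.1 : ℤ) : ZMod q).valMinAbs = n.1 :=
    valMinAbs_intCast_of_abs_lt_half (by rw [abs_of_pos (hc.trans_lt n.2.1)]; exact n.2.2)
  let i (n : S) : T := ⟨n.1, by rw [hval n]; exact n.2.1.le.trans (le_abs_self _)⟩
  have hi : Function.Injective i := fun m n hmn ↦ Subtype.ext <| by
    rw [← hval m, ← hval n]
    exact congrArg (fun x ↦ x.1.valMinAbs) hmn
  calc ∑' n : S, f (n.1 : ZMod q)
      ≤ ∑' x : T, f x :=
        tsum_comp_le_tsum_of_inj (f := fun x : T ↦ f x) .of_finite (fun x ↦ hf x) hi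
    _ = ∑ x : T, f x := tsum_fintype _
    _ = ∑ x : ZMod q with c ≤ |(x.valMinAbs : ℝ)|, f x := (Finset.sum_subtype _ (by simp) f).symm

lemma sum_tsum_exp_neg_mul_sq_tail_le {a b c : ℝ} (hb : 0 < b) (hba : b ≤ a) (hc : 0 ≤ c) :
    ∑ x : ZMod q with c ≤ |(x.valMinAbs : ℝ)|,
        ∑' k : ℤ, exp (-a * ((x.valMinAbs + q * k : ℤ) : ℝ) ^ 2) ≤
      exp ((b - a) * c ^ 2) * ∑' n : ℤ, exp (-b * (n : ℝ) ^ 2) := by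
  have hsummable {d : ℝ} (hd : 0 < d) (x : ZMod q) :
      Summable fun k : ℤ ↦ exp (-d * ((x.valMinAbs + q * k : ℤ) : ℝ) ^ 2) :=
    (summable_exp_neg_mul_int_sq hd).comp_injective (injective_valMinAbs_add_mul x)
  have hclass (x : ZMod q) (hx : c ≤ |(x.valMinAbs : ℝ)|) :
      ∑' k : ℤ, exp (-a * ((x.valMinAbs + q * k : ℤ) : ℝ) ^ 2) ≤
        exp ((b - a) * c ^ 2) * ∑' k : ℤ, exp (-b * ((x.valMinAbs + q * k : ℤ) : ℝ) ^ 2) := by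
    rw [← tsum_mul_left]
    refine (hsummable (hb.trans_le hba) x).tsum_le_tsum (fun k ↦ ?_) ((hsummable hb x).mul_left _)
    exact exp_neg_mul_sq_le_exp_mul_exp hba hc
      (hx.trans (mod_cast abs_valMinAbs_le_abs_valMinAbs_add_mul x k))
  rw [← sum_tsum_valMinAbs_add_mul (q := q) (summable_exp_neg_mul_int_sq hb), Finset.mul_sum]
  refine (Finset.sum_le_sum fun x hx ↦ hclass x (Finset.mem_filter.1 hx).2).trans ?_
  exact Finset.sum_le_univ_sum_of_nonneg fun x ↦
    mul_nonneg (exp_pos _).le (tsum_nonneg fun _ ↦ (exp_pos _).le)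

end ResidueClasses

section FoldedGaussian

variable {q : ℕ} [NeZero q] {σ C : ℝ}

lemma sqrt_theta1_le (hσ : 0 < σ) (x : ZMod q) :
    √(theta1 σ q x) ≤
      (∑' k : ℤ, exp (-(π / (2 * σ ^ 2)) * ((x.valMinAbs + q * k : ℤ) : ℝ) ^ 2)) / √σ := by
  have hmass : σ ≤ ∑' k : ℤ, exp (-π * (k : ℝ) ^ 2 / σ ^ 2) := by
    have h := sqrt_pi_div_le_tsum_exp_neg_mul_int_sq (b := π / σ ^ 2) (by positivity)
    rw [div_div_cancel₀ pi_ne_zero, sqrt_sq hσ.le] at h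
    convert h using 4
    ring
  have hsqrt (k : ℤ) : √(exp (-π * ((x.valMinAbs : ℝ) + q * k) ^ 2 / σ ^ 2)) =
      exp (-(π / (2 * σ ^ 2)) * ((x.valMinAbs + q * k : ℤ) : ℝ) ^ 2) := by
    rw [← exp_half]
    push_cast
    ring_nf
  have hsummable : Summable fun k : ℤ ↦ √(exp (-π * ((x.valMinAbs : ℝ) + q * k) ^ 2 / σ ^ 2)) := by
    simp only [hsqrt]
    exact (summable_exp_neg_mul_int_sq (b := π / (2 * σ ^ 2)) (by positivity)).comp_injective
      (injective_valMinAbs_add_mul x)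
  calc √(theta1 σ q x)
      ≤ √((∑' k : ℤ, exp (-π * ((x.valMinAbs : ℝ) + q * k) ^ 2 / σ ^ 2)) / σ) :=
        sqrt_le_sqrt <| div_le_div_of_nonneg_left (tsum_nonneg fun _ ↦ (exp_pos _).le) hσ hmass
    _ = √(∑' k : ℤ, exp (-π * ((x.valMinAbs : ℝ) + q * k) ^ 2 / σ ^ 2)) / √σ :=
        sqrt_div (tsum_nonneg fun _ ↦ (exp_pos _).le) σ
    _ ≤ _ := by
        simp only [← hsqrt]
        gcongr
        exact sqrt_tsum_le_tsum_sqrt (fun _ ↦ (exp_pos _).le) hsummable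

lemma sum_sqrt_theta1_tail_le {b : ℝ} (hσ : 0 < σ) (hb : 0 < b) (hbσ : b ≤ π / (2 * σ ^ 2))
    (hC : 0 ≤ C) :
    ∑ x : ZMod q with C ≤ |(x.valMinAbs : ℝ)|, √(theta1 σ q x) ≤
      exp ((b - π / (2 * σ ^ 2)) * C ^ 2) * (1 + √(π / b)) / √σ := by
  refine (Finset.sum_le_sum fun x _ ↦ sqrt_theta1_le hσ x).trans ?_
  rw [← Finset.sum_div]
  gcongr
  calc ∑ x : ZMod q with C ≤ |(x.valMinAbs : ℝ)|,
        ∑' k : ℤ, exp (-(π / (2 * σ ^ 2)) * ((x.valMinAbs + q * k : ℤ) : ℝ) ^ 2)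
      ≤ exp ((b - π / (2 * σ ^ 2)) * C ^ 2) * ∑' n : ℤ, exp (-b * (n : ℝ) ^ 2) :=
        sum_tsum_exp_neg_mul_sq_tail_le hb hbσ hC
    _ ≤ exp ((b - π / (2 * σ ^ 2)) * C ^ 2) * (1 + √(π / b)) := by
        gcongr
        exact tsum_exp_neg_mul_int_sq_le hb

theorem stmt_16_general (hσ : 0 < σ) (hC : σ / √π ≤ C) :
    ∑ x : ZMod q with C ≤ |(x.valMinAbs : ℝ)|, √(theta1 σ q x) ≤
      (1 + √2 * σ) / √σ * (C / (√2 * σ)) * √(2 * π * exp 1) * exp (-π * C ^ 2 / (2 * σ ^ 2)) := by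
  have hC0 : 0 < C := (by positivity : 0 < σ / √π).trans_le hC
  have hσC : σ ≤ C * √π := (div_le_iff₀ (by positivity)).1 hC
  have hbσ : 1 / (2 * C ^ 2) ≤ π / (2 * σ ^ 2) := by
    rw [div_le_div_iff₀ (by positivity) (by positivity)]
    have hsq : σ ^ 2 ≤ C ^ 2 * π := by
      simpa only [mul_pow, sq_sqrt pi_pos.le] using pow_le_pow_left₀ hσ.le hσC 2
    linarith
  have hexp : exp ((1 / (2 * C ^ 2) - π / (2 * σ ^ 2)) * C ^ 2) =
      √(exp 1) * exp (-π * C ^ 2 / (2 * σ ^ 2)) := by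
    rw [← exp_half, ← exp_add]
    congr 1
    field_simp
    ring
  have hsqrt : √(π / (1 / (2 * C ^ 2))) = √2 * √π * C := by
    rw [div_div_eq_mul_div, div_one, ← mul_assoc, mul_comm π, sqrt_mul (by positivity),
      sqrt_mul zero_le_two, sqrt_sq hC0.le]
  have hlinear : 1 + √2 * √π * C ≤ (1 + √2 * σ) * (C / (√2 * σ)) * (√2 * √π) := calc
    1 + √2 * √π * C ≤ C * √π / σ + √2 * √π * C := by
      gcongr
      exact (one_le_div hσ).2 hσC
    _ = _ := by field_simp
  calc ∑ x : ZMod q with C ≤ |(x.valMinAbs : ℝ)|, √(theta1 σ q x)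
      ≤ √(exp 1) * exp (-π * C ^ 2 / (2 * σ ^ 2)) * (1 + √2 * √π * C) / √σ := by
        rw [← hexp, ← hsqrt]
        exact sum_sqrt_theta1_tail_le hσ (by positivity) hbσ hC0.le
    _ ≤ √(exp 1) * exp (-π * C ^ 2 / (2 * σ ^ 2)) *
          ((1 + √2 * σ) * (C / (√2 * σ)) * (√2 * √π)) / √σ := by gcongr
    _ = _ := by
        rw [sqrt_mul (by positivity), sqrt_mul zero_le_two]
        ring

end FoldedGaussian

/-- For `q ≥ 2`, `σ > 0` and `σ/√π ≤ C ≤ q/2`: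
`Σ_{x ∈ ℤ, C < x < q/2} √(ϑ_{σ,q}(x)) ≤
  ((1 + √2·σ)/√σ)·(C/(√2·σ))·√(2πe)·exp(−πC²/(2σ²))`,
where `ϑ_{σ,q}` is evaluated at the class of `x` modulo `q`. -/
theorem stmt_16 (q : ℕ) [NeZero q] (hq : 2 ≤ q) (σ C : ℝ) (hσ : 0 < σ)
    (hC1 : σ / Real.sqrt Real.pi ≤ C) (hC2 : C ≤ (q : ℝ) / 2) :
    (∑' x : {x : ℤ // C < (x : ℝ) ∧ (x : ℝ) < (q : ℝ) / 2},
        Real.sqrt (theta1 σ q ((x.1 : ℤ) : ZMod q))) ≤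
      (1 + Real.sqrt 2 * σ) / Real.sqrt σ * (C / (Real.sqrt 2 * σ)) *
        Real.sqrt (2 * Real.pi * Real.exp 1) *
        Real.exp (-Real.pi * C ^ 2 / (2 * σ ^ 2)) := by
  have hC : 0 ≤ C := (by positivity : 0 ≤ σ / √π).trans hC1
  exact (tsum_intCast_le_sum_valMinAbs (fun _ ↦ sqrt_nonneg _) hC).trans (stmt_16_general hσ hC1)
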